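/- arXiv:2105.00165 — 2 statements merged into one kernel-verified Lean document; each statement's English description precedes it below -/
import Mathlib

section
/- Let n ≥ 1 and let A be an n×n real matrix with entries in {0,1}, interpreted as the adjacency matrix of a directed graph on vertices {1,…,n} with an edge from i to j whenever A_{ij} = 1. Let D be the diagonal matrix with D_{ii} = Σ_j A_{ij} and let L = D − A be the graph Laplacian. If the digraph is strongly connected, i.e. for every pair of distinct vertices i, j there is a directed path from i to j (the transitive closure of the edge relation relates every ordered pair of distinct vertices), then 0 is a simple eigenvalue of L: 0 is a root of the characteristic polynomial of L of multiplicity exactly 1. -/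
/-!
At a vertex where `x` is maximal, every term of `(L x) i = ∑ j, A i j * (x i - x j)` is
nonnegative, and dually at a minimum. This has two consequences.

* If `L x = 0`, then maximality propagates along edges, and so does minimality. Both reach any
  vertex that is reachable from everywhere, so `x` is constant: `ker L` is the line of constants.
* If `L x` is a constant `c`, then `0 ≤ c ≤ 0`, so `range L` meets `ker L` trivially. Hence `0` has
  no generalized eigenvectors beyond the kernel, and its algebraic multiplicity is
  `dim ker L = 1`.
-/

open Matrix Module

section GeneralizedEigenspace

theorem maxGenEigenspace_eq_eigenspace_of_disjoint {R M : Type*} [CommRing R] [AddCommGroup M]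
    [Module R M] {f : End R M} {μ : R}
    (h : Disjoint (LinearMap.range (f - μ • (1 : End R M))) (f.eigenspace μ)) :
    f.maxGenEigenspace μ = f.eigenspace μ := by
  refine le_antisymm (fun x hx ↦ ?_) End.eigenspace_le_maxGenEigenspace
  obtain ⟨k, hk⟩ := (End.mem_maxGenEigenspace f μ x).mp hx
  rw [End.eigenspace_def] at h ⊢
  clear hx
  induction k generalizing x with
  | zero => simp_all
  | succ k ih =>
    rw [pow_succ, End.mul_apply] at hk
    exact LinearMap.disjoint_ker.mp h _ (LinearMap.mem_range_self _ x) (ih _ hk)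

theorem rootMultiplicity_charpoly_eq_finrank_eigenspace_of_disjoint {K V : Type*} [Field K]
    [AddCommGroup V] [Module K V] [FiniteDimensional K V] {f : End K V} {μ : K}
    (h : Disjoint (LinearMap.range (f - μ • (1 : End K V))) (f.eigenspace μ)) :
    f.charpoly.rootMultiplicity μ = finrank K (f.eigenspace μ) := by
  rw [← LinearMap.finrank_maxGenEigenspace_eq, maxGenEigenspace_eq_eigenspace_of_disjoint h]

end GeneralizedEigenspace

section Laplacian

variable {ι R : Type*} [Fintype ι]

/-- The Laplacian `D - A` of the weighted digraph with weight matrix `A`, where `D` is the diagonal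
matrix of row sums (out-degrees). -/
def rowLaplacian [DecidableEq ι] [AddCommGroup R] (A : Matrix ι ι R) : Matrix ι ι R :=
  diagonal (fun i ↦ ∑ j, A i j) - A

/-- The vertex `r` is globally reachable: in the digraph whose edges are the positive entries of
`A`, there is a directed path, possibly of length zero, from every vertex to `r`. -/
def IsGloballyReachable {ι R : Type*} [Zero R] [LT R] (A : Matrix ι ι R) (r : ι) : Prop :=
  ∀ i, Relation.ReflTransGen (fun a b ↦ 0 < A a b) i r

section MaximumPrinciple

variable [DecidableEq ι]

theorem rowLaplacian_mulVec_apply [NonUnitalNonAssocRing R] (A : Matrix ι ι R) (x : ι → R)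
    (i : ι) : (rowLaplacian A *ᵥ x) i = ∑ j, A i j * (x i - x j) := by
  rw [rowLaplacian, sub_mulVec, Pi.sub_apply, mulVec_diagonal]
  simp only [mulVec, dotProduct, mul_sub, Finset.sum_sub_distrib, Finset.sum_mul]

variable [Ring R] [LinearOrder R] [IsStrictOrderedRing R] {A : Matrix ι ι R} {x : ι → R}
  {c : R} {i j r : ι}

theorem rowLaplacian_mulVec_nonneg_of_forall_le (hA : ∀ j, 0 ≤ A i j) (hmax : ∀ j, x j ≤ x i) :
    0 ≤ (rowLaplacian A *ᵥ x) i := by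
  rw [rowLaplacian_mulVec_apply]
  exact Finset.sum_nonneg fun j _ ↦ mul_nonneg (hA j) (sub_nonneg.mpr (hmax j))

theorem rowLaplacian_mulVec_nonpos_of_forall_ge (hA : ∀ j, 0 ≤ A i j) (hmin : ∀ j, x i ≤ x j) :
    (rowLaplacian A *ᵥ x) i ≤ 0 := by
  rw [rowLaplacian_mulVec_apply]
  exact Finset.sum_nonpos fun j _ ↦
    mul_nonpos_of_nonneg_of_nonpos (hA j) (sub_nonpos.mpr (hmin j))

theorem eq_zero_of_rowLaplacian_mulVec_eq_const [Nonempty ι] (hA : ∀ i j, 0 ≤ A i j)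
    (h : ∀ i, (rowLaplacian A *ᵥ x) i = c) : c = 0 := by
  obtain ⟨imax, himax⟩ := Finite.exists_max x
  obtain ⟨imin, himin⟩ := Finite.exists_min x
  apply le_antisymm
  · exact h imin ▸ rowLaplacian_mulVec_nonpos_of_forall_ge (hA imin) himin
  · exact h imax ▸ rowLaplacian_mulVec_nonneg_of_forall_le (hA imax) himax

theorem eq_of_rowLaplacian_mulVec_nonpos_of_forall_le (hA : ∀ j, 0 ≤ A i j)
    (hx : (rowLaplacian A *ᵥ x) i ≤ 0) (hmax : ∀ j, x j ≤ x i) (hij : 0 < A i j) :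
    x j = x i := by
  have hterm : ∀ k ∈ Finset.univ, 0 ≤ A i k * (x i - x k) := fun k _ ↦
    mul_nonneg (hA k) (sub_nonneg.mpr (hmax k))
  have hsum : ∑ k, A i k * (x i - x k) = 0 := by
    rw [← rowLaplacian_mulVec_apply]
    exact hx.antisymm (rowLaplacian_mulVec_nonneg_of_forall_le hA hmax)
  have hj : A i j * (x i - x j) = 0 :=
    (Finset.sum_eq_zero_iff_of_nonneg hterm).mp hsum j (Finset.mem_univ j)
  exact (sub_eq_zero.mp ((mul_eq_zero.mp hj).resolve_left hij.ne')).symm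

namespace IsGloballyReachable

theorem le_of_rowLaplacian_mulVec_nonpos (hr : IsGloballyReachable A r) (hA : ∀ i j, 0 ≤ A i j)
    (hx : ∀ i, (rowLaplacian A *ᵥ x) i ≤ 0) (i : ι) : x i ≤ x r := by
  have : Nonempty ι := ⟨r⟩
  obtain ⟨imax, himax⟩ := Finite.exists_max x
  suffices ∀ b, Relation.ReflTransGen (fun a b ↦ 0 < A a b) imax b → x b = x imax from
    this r (hr imax) ▸ himax i
  intro b hpath
  induction hpath with
  | refl => rfl
  | @tail a b _ hab ha =>
    rw [← ha]
    exact eq_of_rowLaplacian_mulVec_nonpos_of_forall_le (hA a) (hx a) (ha ▸ himax) hab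

theorem le_of_rowLaplacian_mulVec_nonneg (hr : IsGloballyReachable A r) (hA : ∀ i j, 0 ≤ A i j)
    (hx : ∀ i, 0 ≤ (rowLaplacian A *ᵥ x) i) (i : ι) : x r ≤ x i := by
  have hneg : ∀ i, (rowLaplacian A *ᵥ (-x)) i ≤ 0 := fun i ↦ by
    rw [mulVec_neg]
    exact neg_nonpos.mpr (hx i)
  exact neg_le_neg_iff.mp (hr.le_of_rowLaplacian_mulVec_nonpos hA hneg i)

theorem rowLaplacian_mulVec_eq_zero_iff (hr : IsGloballyReachable A r) (hA : ∀ i j, 0 ≤ A i j) :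
    rowLaplacian A *ᵥ x = 0 ↔ ∀ i, x i = x r := by
  constructor
  · intro hx i
    exact le_antisymm (hr.le_of_rowLaplacian_mulVec_nonpos hA (fun j ↦ (congrFun hx j).le) i)
      (hr.le_of_rowLaplacian_mulVec_nonneg hA (fun j ↦ (congrFun hx j).ge) i)
  · intro hx
    ext i
    simp [rowLaplacian_mulVec_apply, hx]

end IsGloballyReachable

end MaximumPrinciple

namespace IsGloballyReachable

theorem of_forall_transGen_eq_one {ι R : Type*} [Zero R] [One R] [PartialOrder R]
    [ZeroLEOneClass R] [NeZero (1 : R)] {A : Matrix ι ι R} {r : ι}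
    (h : ∀ i, i ≠ r → Relation.TransGen (fun a b ↦ A a b = 1) i r) : IsGloballyReachable A r := by
  intro i
  obtain rfl | hir := eq_or_ne i r
  · exact .refl
  · exact (h i hir).to_reflTransGen.mono (fun a b hab ↦ by simp [hab]) _ _

variable [DecidableEq ι] [CommRing R] [LinearOrder R] [IsStrictOrderedRing R] {A : Matrix ι ι R}
  {r : ι}

theorem ker_toLin'_rowLaplacian (hr : IsGloballyReachable A r) (hA : ∀ i j, 0 ≤ A i j) :
    LinearMap.ker (toLin' (rowLaplacian A)) = R ∙ (1 : ι → R) := by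
  ext x
  rw [LinearMap.mem_ker, toLin'_apply, hr.rowLaplacian_mulVec_eq_zero_iff hA,
    Submodule.mem_span_singleton]
  constructor
  · intro hx
    exact ⟨x r, by ext i; simp [hx i]⟩
  · rintro ⟨c, rfl⟩ i
    rfl

theorem disjoint_range_ker_toLin'_rowLaplacian (hr : IsGloballyReachable A r)
    (hA : ∀ i j, 0 ≤ A i j) :
    Disjoint (LinearMap.range (toLin' (rowLaplacian A)))
      (LinearMap.ker (toLin' (rowLaplacian A))) := by
  have : Nonempty ι := ⟨r⟩
  rw [hr.ker_toLin'_rowLaplacian hA, Submodule.disjoint_def]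
  rintro _ ⟨x, rfl⟩ hconst
  obtain ⟨c, hc⟩ := Submodule.mem_span_singleton.mp hconst
  have hc_zero : c = 0 := eq_zero_of_rowLaplacian_mulVec_eq_const hA (x := x) fun i ↦ by
    rw [← toLin'_apply, ← hc]
    simp
  rw [← hc, hc_zero, zero_smul]

end IsGloballyReachable

theorem laplacian_zero_is_simple_eigenvalue_general {K : Type*} [DecidableEq ι] [Field K]
    [LinearOrder K] [IsStrictOrderedRing K] {A : Matrix ι ι K} {r : ι}
    (hA : ∀ i j, 0 ≤ A i j) (hr : IsGloballyReachable A r) :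
    (rowLaplacian A).charpoly.rootMultiplicity 0 = 1 := by
  have hdisj := hr.disjoint_range_ker_toLin'_rowLaplacian hA
  have hone : (1 : ι → K) ≠ 0 := fun h ↦ one_ne_zero (congrFun h r)
  rw [← charpoly_toLin', rootMultiplicity_charpoly_eq_finrank_eigenspace_of_disjoint
      (by rwa [End.eigenspace_zero, zero_smul, sub_zero]),
    End.eigenspace_zero, hr.ker_toLin'_rowLaplacian hA, finrank_span_singleton hone]

end Laplacian

/-- For a directed graph on `n ≥ 1` vertices given by a 0-1 adjacency matrix `A`
(edge `i → j` iff `A i j = 1`), with Laplacian `L = D - A` where `D` is the diagonal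
matrix of row sums, strong connectedness implies that `0` is a simple eigenvalue of `L`,
i.e. a root of the characteristic polynomial of multiplicity exactly one. -/
theorem laplacian_zero_is_simple_eigenvalue
    (n : ℕ) (hn : 1 ≤ n) (A : Matrix (Fin n) (Fin n) ℝ)
    (hA01 : ∀ i j, A i j = 0 ∨ A i j = 1)
    (hconn : ∀ i j : Fin n, i ≠ j →
      Relation.TransGen (fun a b : Fin n => A a b = 1) i j) :
    ((Matrix.diagonal (fun i => ∑ j, A i j) - A).charpoly).rootMultiplicity 0 = 1 :=
  laplacian_zero_is_simple_eigenvalue_general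
    (fun i j ↦ by obtain h | h := hA01 i j <;> simp [h])
    (.of_forall_transGen_eq_one fun i ↦ hconn i ⟨0, hn⟩)
end

section
/- Let μ > 0 be a real number and m ≥ 1, and consider the 2m×2m real block matrix A = [[0, μ I_m], [−I_m, −I_m]], where I_m is the m×m identity matrix. Then there exists a 2m×2m real symmetric positive definite matrix P such that P A + Aᵀ P is negative definite. -/
open Matrix

/-!
Take `P` with the same block shape as `A`, all four blocks being multiples of the identity:
`P = [[a I, b I], [b I, d I]]`. The Lyapunov equation `P A + Aᵀ P = -2μ I` then reads `b = μ`,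
`μ a = b + d`, `d = μ b + μ`, so `a = μ + 2` and `d = μ (μ + 1)`. The leading coefficient `a` is
positive and so is `a d - b² = μ (μ² + 2 μ + 2)`, hence `P` is positive definite.
-/

section DotProduct

variable {n R : Type*} [Fintype n]

theorem dotProduct_self_nonneg [Ring R] [LinearOrder R] [IsStrictOrderedRing R] (v : n → R) :
    0 ≤ v ⬝ᵥ v :=
  Finset.sum_nonneg fun i _ => mul_self_nonneg (v i)

theorem dotProduct_self_pos [Ring R] [LinearOrder R] [IsStrictOrderedRing R] {v : n → R}
    (hv : v ≠ 0) : 0 < v ⬝ᵥ v :=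
  (dotProduct_self_nonneg v).lt_of_ne' (dotProduct_self_eq_zero.not.mpr hv)

theorem mul_quadratic_dotProduct_eq_add [CommRing R] (a b d : R) (x y : n → R) :
    a * (a * (x ⬝ᵥ x) + (b + b) * (x ⬝ᵥ y) + d * (y ⬝ᵥ y)) =
      (a • x + b • y) ⬝ᵥ (a • x + b • y) + (a * d - b ^ 2) * (y ⬝ᵥ y) := by
  simp only [add_dotProduct, dotProduct_add, smul_dotProduct, dotProduct_smul, smul_eq_mul,
    dotProduct_comm y x]
  ring

theorem quadratic_dotProduct_pos [CommRing R] [LinearOrder R] [IsStrictOrderedRing R]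
    {a b d : R} (ha : 0 < a) (hdet : b ^ 2 < a * d) {x y : n → R} (hxy : x ≠ 0 ∨ y ≠ 0) :
    0 < a * (x ⬝ᵥ x) + (b + b) * (x ⬝ᵥ y) + d * (y ⬝ᵥ y) := by
  rcases eq_or_ne y 0 with rfl | hy
  · have hx : x ≠ 0 := hxy.resolve_right (not_not.mpr rfl)
    simpa using mul_pos ha (dotProduct_self_pos hx)
  · refine pos_of_mul_pos_right ?_ ha.le
    rw [mul_quadratic_dotProduct_eq_add]
    exact add_pos_of_nonneg_of_pos (dotProduct_self_nonneg _)
      (mul_pos (sub_pos.mpr hdet) (dotProduct_self_pos hy))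

end DotProduct

section ScalarBlocks

variable {n R : Type*} [Fintype n] [DecidableEq n]

theorem sumElim_dotProduct_fromBlocks_smul_one_mulVec [CommSemiring R] (a b c d : R)
    (x y : n → R) :
    Sum.elim x y ⬝ᵥ
        fromBlocks (a • (1 : Matrix n n R)) (b • 1) (c • 1) (d • 1) *ᵥ Sum.elim x y =
      a * (x ⬝ᵥ x) + (b + c) * (x ⬝ᵥ y) + d * (y ⬝ᵥ y) := by
  simp only [fromBlocks_mulVec, Sum.elim_comp_inl, Sum.elim_comp_inr, smul_mulVec, one_mulVec,
    sumElim_dotProduct_sumElim, dotProduct_add, dotProduct_smul, smul_eq_mul,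
    dotProduct_comm y x]
  ring

theorem dotProduct_fromBlocks_smul_one_mulVec_pos [CommRing R] [LinearOrder R]
    [IsStrictOrderedRing R] {a b d : R} (ha : 0 < a) (hdet : b ^ 2 < a * d) {z : n ⊕ n → R}
    (hz : z ≠ 0) :
    0 < z ⬝ᵥ fromBlocks (a • (1 : Matrix n n R)) (b • 1) (b • 1) (d • 1) *ᵥ z := by
  obtain ⟨x, y, rfl⟩ : ∃ x y, z = Sum.elim x y :=
    ⟨z ∘ Sum.inl, z ∘ Sum.inr, (Sum.elim_comp_inl_inr z).symm⟩
  have hxy : x ≠ 0 ∨ y ≠ 0 := by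
    contrapose! hz
    rw [hz.1, hz.2, Sum.elim_zero_zero]
  rw [sumElim_dotProduct_fromBlocks_smul_one_mulVec]
  exact quadratic_dotProduct_pos ha hdet hxy

end ScalarBlocks

section Lyapunov

variable {R : Type*} [CommRing R] (n : Type*) [DecidableEq n]

/-- A solution `P` of the Lyapunov equation `P A + Aᵀ P = -2μ I` for the block matrix
`A = [[0, μ I], [-I, -I]]`, with blocks indexed by `n`. -/
def lyapunovBlock (μ : R) : Matrix (n ⊕ n) (n ⊕ n) R :=
  fromBlocks ((μ + 2) • 1) (μ • 1) (μ • 1) ((μ * (μ + 1)) • 1)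

theorem lyapunovBlock_isSymm (μ : R) : (lyapunovBlock n μ).IsSymm :=
  (isSymm_one.smul _).fromBlocks (isSymm_one.smul _) (isSymm_one.smul _)

variable [Fintype n]

theorem lyapunovBlock_mul_add_transpose_mul (μ : R) :
    lyapunovBlock n μ * fromBlocks (0 : Matrix n n R) (μ • 1) (-1) (-1) +
        (fromBlocks (0 : Matrix n n R) (μ • 1) (-1) (-1))ᵀ * lyapunovBlock n μ =
      -((2 * μ) • 1) := by
  rw [lyapunovBlock, ← fromBlocks_one, fromBlocks_smul, fromBlocks_neg, fromBlocks_transpose,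
    fromBlocks_multiply, fromBlocks_multiply, fromBlocks_add]
  simp only [transpose_zero, transpose_smul, transpose_one, transpose_neg, mul_zero, zero_mul,
    mul_neg, neg_mul, mul_one, one_mul, smul_mul, mul_smul]
  congr 1 <;> module

variable {n} [LinearOrder R] [IsStrictOrderedRing R] {μ : R}

theorem dotProduct_lyapunovBlock_mulVec_pos (hμ : 0 < μ) {z : n ⊕ n → R} (hz : z ≠ 0) :
    0 < z ⬝ᵥ lyapunovBlock n μ *ᵥ z := by
  refine dotProduct_fromBlocks_smul_one_mulVec_pos (by positivity) (sub_pos.mp ?_) hz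
  calc 0 < μ * (μ ^ 2 + 2 * μ + 2) := by positivity
    _ = (μ + 2) * (μ * (μ + 1)) - μ ^ 2 := by ring

theorem exists_lyapunov_matrix_block_general (hμ : 0 < μ) :
    ∃ P : Matrix (n ⊕ n) (n ⊕ n) R,
      P.IsSymm ∧
      (∀ z : n ⊕ n → R, z ≠ 0 → 0 < z ⬝ᵥ P *ᵥ z) ∧
      (∀ z : n ⊕ n → R, z ≠ 0 →
        z ⬝ᵥ (P * fromBlocks (0 : Matrix n n R) (μ • 1) (-1) (-1) +
              (fromBlocks (0 : Matrix n n R) (μ • 1) (-1) (-1))ᵀ * P) *ᵥ z < 0) := by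
  refine ⟨lyapunovBlock n μ, lyapunovBlock_isSymm n μ,
    fun z hz => dotProduct_lyapunovBlock_mulVec_pos hμ hz, fun z hz => ?_⟩
  rw [lyapunovBlock_mul_add_transpose_mul, neg_mulVec, smul_mulVec, one_mulVec, dotProduct_neg,
    dotProduct_smul, smul_eq_mul, neg_lt_zero]
  exact mul_pos (by positivity) (dotProduct_self_pos hz)

end Lyapunov

/-- For `μ > 0` and `m ≥ 1`, there is a symmetric positive definite `P` with
`P A + Aᵀ P` negative definite, where `A = [[0, μ I], [−I, −I]]` is the `2m × 2m` real
block matrix. -/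
theorem exists_lyapunov_matrix_block
    (μ : ℝ) (hμ : 0 < μ) (m : ℕ) (hm : 1 ≤ m) :
    ∃ P : Matrix (Fin m ⊕ Fin m) (Fin m ⊕ Fin m) ℝ,
      P.IsSymm ∧
      (∀ z : (Fin m ⊕ Fin m) → ℝ, z ≠ 0 → 0 < z ⬝ᵥ P.mulVec z) ∧
      (∀ z : (Fin m ⊕ Fin m) → ℝ, z ≠ 0 →
        z ⬝ᵥ (P * Matrix.fromBlocks (0 : Matrix (Fin m) (Fin m) ℝ) (μ • 1) (-1) (-1) +
              (Matrix.fromBlocks (0 : Matrix (Fin m) (Fin m) ℝ) (μ • 1) (-1) (-1))ᵀ *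
                P).mulVec z < 0) :=
  exists_lyapunov_matrix_block_general hμ
end
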